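/- (Proposition: derivative of the two-risk ruin probability with respect to the loadings.) Let F₁, …, F₅ be distribution functions of probability measures on [0,∞) vanishing at 0, with compounding operators Ψⱼ = Ψ_{Fⱼ}, let Γ₁, …, Γ₅ : [0,∞) → ℝ be measurable and locally bounded, and let α : ℝ² → ℝ⁵, θ ↦ α(θ), be differentiable. For each θ let V_θ be the unique measurable locally bounded solution of V_θ = ⟨α(θ), Γ⟩ + ⟨α(θ), Ψ⟩ V_θ, i.e. V_θ(x) = Σ_{j=1}^5 αⱼ(θ)Γⱼ(x) + Σ_{j=1}^5 αⱼ(θ)(Ψⱼ V_θ)(x). Then for every x ≥ 0 the map θ ↦ V_θ(x) is differentiable and ∂V_θ(x)/∂θᵢ = Σ_{j=1}^5 u_{α(θ), Γⱼ + Ψⱼ V_θ}(x) · ∂αⱼ(θ)/∂θᵢ for i = 1, 2, where u_{γ,h} = Σ_{n=0}^∞ ⟨γ,Ψ⟩ⁿ h. -/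

import Mathlib

open MeasureTheory Set Filter

/-- The compounding operator `Ψ_F` associated with the probability measure `μ` on `[0,∞)`
(whose distribution function is `F`, so that `F(0) = 0` reads `μ (Iic 0) = 0`):
`(Ψ_F h)(x) = ∫₀ˣ (h(z) - ∫₀ᶻ h(z-y) dF(y)) dz`,
the inner integral being the Lebesgue–Stieltjes integral with respect to `F`. -/
noncomputable def Psi (μ : Measure ℝ) (h : ℝ → ℝ) : ℝ → ℝ :=
  fun x => ∫ z in (0:ℝ)..x, (h z - ∫ y in Icc (0:ℝ) z, h (z - y) ∂μ)

/-- `h : [0,∞) → ℝ` is locally bounded. -/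
def LocBdd (h : ℝ → ℝ) : Prop :=
  ∀ x : ℝ, ∃ M : ℝ, ∀ z ∈ Icc (0:ℝ) x, |h z| ≤ M

/-- `‖h‖_{[0,x]} = sup_{z ∈ [0,x]} |h z|`. -/
noncomputable def supNorm (h : ℝ → ℝ) (x : ℝ) : ℝ :=
  sSup ((fun z => |h z|) '' Icc (0:ℝ) x)

/-- The combined operator `⟨γ,Ψ⟩ h = Σ_{j=1}^5 γⱼ Ψⱼ h`. -/
noncomputable def PsiVec (μ : Fin 5 → Measure ℝ) (γ : Fin 5 → ℝ) (h : ℝ → ℝ) : ℝ → ℝ :=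
  fun x => ∑ j, γ j * Psi (μ j) h x

/-- `u_{γ,h}(x) = Σ_{n=0}^∞ (⟨γ,Ψ⟩ⁿ h)(x)`. -/
noncomputable def uSol (μ : Fin 5 → Measure ℝ) (γ : Fin 5 → ℝ) (h : ℝ → ℝ) : ℝ → ℝ :=
  fun x => ∑' n : ℕ, ((PsiVec μ γ)^[n] h) x

/-!
Extending functions on `[0,∞)` by zero, `Ψ_F` becomes a linear endomorphism of the space of
measurable locally bounded functions, namely integration composed with `1 - (F * ·)`. It is of
Volterra type: it maps the majorant `M zⁿ / n!` to a multiple of `M zⁿ⁺¹ / (n + 1)!`. Hence the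
Neumann series `u_{γ,h}` converges, with an exponential bound, and inverts `1 - ⟨γ,Ψ⟩`.

Applying this inverse to the difference of two of the defining equations gives the exact identity
`V_θ'(x) - V_θ(x) = ∑ⱼ (αⱼ(θ') - αⱼ(θ)) u_{α(θ), Γⱼ + Ψⱼ V_θ'}(x)`.
The exponential bound, used with the roles of `θ` and `θ'` exchanged, shows that `V_θ' → V_θ`
locally uniformly as `θ' → θ`, so the coefficients on the right are continuous in `θ'` at `θ`, and
the derivative can be read off.
-/

lemma Psi_eqOn (μ : Measure ℝ) {h g : ℝ → ℝ} (hg : EqOn h g (Ici 0)) :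
    EqOn (Psi μ h) (Psi μ g) (Ici 0) := by
  refine fun x (hx : 0 ≤ x) => intervalIntegral.integral_congr fun z hz => ?_
  rw [uIcc_of_le hx] at hz
  exact congrArg₂ (· - ·) (hg hz.1) <|
    setIntegral_congr_fun measurableSet_Icc fun y hy => hg (sub_nonneg.2 hy.2)

lemma PsiVec_eqOn (μ : Fin 5 → Measure ℝ) (γ : Fin 5 → ℝ) {h g : ℝ → ℝ} (hg : EqOn h g (Ici 0)) :
    EqOn (PsiVec μ γ h) (PsiVec μ γ g) (Ici 0) :=
  fun _ hx => Finset.sum_congr rfl fun j _ => by rw [Psi_eqOn (μ j) hg hx]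

lemma iterate_PsiVec_eqOn (μ : Fin 5 → Measure ℝ) (γ : Fin 5 → ℝ) {h g : ℝ → ℝ}
    (hg : EqOn h g (Ici 0)) (n : ℕ) :
    EqOn ((PsiVec μ γ)^[n] h) ((PsiVec μ γ)^[n] g) (Ici 0) := by
  induction n with
  | zero => exact hg
  | succ n ih =>
    simp only [Function.iterate_succ_apply']
    exact PsiVec_eqOn μ γ ih

lemma measurable_setIntegral_Icc_comp_sub {μ : Measure ℝ} [SFinite μ] {h : ℝ → ℝ}
    (hm : Measurable h) (h0 : ∀ x < 0, h x = 0) :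
    Measurable fun z => ∫ y in Icc 0 z, h (z - y) ∂μ := by
  have integral_Icc_eq_Ici (z : ℝ) :
      ∫ y in Icc 0 z, h (z - y) ∂μ = ∫ y in Ici 0, h (z - y) ∂μ := by
    refine (setIntegral_eq_of_subset_of_forall_sdiff_eq_zero measurableSet_Ici
      Icc_subset_Ici_self fun y hy => h0 _ (sub_neg.2 ?_)).symm
    exact not_le.1 fun hyz => hy.2 ⟨hy.1, hyz⟩
  simp only [integral_Icc_eq_Ici]
  exact (StronglyMeasurable.integral_prod_right' (f := fun p : ℝ × ℝ => h (p.1 - p.2))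
    (hm.comp (measurable_fst.sub measurable_snd)).stronglyMeasurable).measurable

lemma abs_setIntegral_Icc_comp_sub_le (μ : Measure ℝ) [IsFiniteMeasure μ] {h : ℝ → ℝ} {z M : ℝ}
    (hz : 0 ≤ z) (hM : ∀ w ∈ Icc 0 z, |h w| ≤ M) :
    |∫ y in Icc 0 z, h (z - y) ∂μ| ≤ μ.real univ * M := by
  have hM0 : 0 ≤ M := (abs_nonneg _).trans (hM 0 ⟨le_rfl, hz⟩)
  calc |∫ y in Icc 0 z, h (z - y) ∂μ| ≤ M * μ.real (Icc 0 z) :=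
        norm_setIntegral_le_of_norm_le_const (f := fun y => h (z - y)) (measure_lt_top _ _)
          fun y hy => hM (z - y) ⟨sub_nonneg.2 hy.2, sub_le_self z hy.1⟩
    _ ≤ μ.real univ * M := by
        rw [mul_comm]
        exact mul_le_mul_of_nonneg_right (measureReal_mono (subset_univ _)) hM0

/-- The measurable locally bounded functions on `[0,∞)`, encoded as functions on `ℝ` that vanish on
`(-∞,0)` so that agreement on `[0,∞)` is equality. -/
def LocBddMeas : Submodule ℝ (ℝ → ℝ) where
  carrier := {h | Measurable h ∧ LocBdd h ∧ ∀ x < 0, h x = 0}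
  zero_mem' := ⟨measurable_zero, fun _ => ⟨0, by simp⟩, fun _ _ => rfl⟩
  add_mem' := by
    rintro h g ⟨hm, hb, h0⟩ ⟨gm, gb, g0⟩
    refine ⟨hm.add gm, fun x => ?_, fun x hx => by simp [h0 x hx, g0 x hx]⟩
    obtain ⟨M, hM⟩ := hb x
    obtain ⟨N, hN⟩ := gb x
    exact ⟨M + N, fun z hz => (abs_add_le _ _).trans (add_le_add (hM z hz) (hN z hz))⟩
  smul_mem' := by
    rintro c h ⟨hm, hb, h0⟩
    refine ⟨hm.const_smul c, fun x => ?_, fun x hx => by simp [h0 x hx]⟩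
    obtain ⟨M, hM⟩ := hb x
    refine ⟨|c| * M, fun z hz => ?_⟩
    rw [Pi.smul_apply, smul_eq_mul, abs_mul]
    exact mul_le_mul_of_nonneg_left (hM z hz) (abs_nonneg c)

namespace LocBddMeas

instance : CoeFun LocBddMeas fun _ => ℝ → ℝ := ⟨Subtype.val⟩

lemma measurable (h : LocBddMeas) : Measurable h := h.2.1

lemma locBdd (h : LocBddMeas) : LocBdd h := h.2.2.1

lemma apply_of_neg (h : LocBddMeas) {x : ℝ} (hx : x < 0) : h x = 0 := h.2.2.2 x hx

lemma mem_of_continuous {h : ℝ → ℝ} (hc : Continuous h) (h0 : ∀ x < 0, h x = 0) :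
    h ∈ LocBddMeas :=
  ⟨hc.measurable, fun _ => isCompact_Icc.exists_bound_of_continuousOn hc.continuousOn, h0⟩

/-- The element of `LocBddMeas` represented by a function that is only relevant on `[0,∞)`. -/
noncomputable def extendByZero (h : ℝ → ℝ) (hm : Measurable h) (hb : LocBdd h) : LocBddMeas :=
  ⟨(Ici 0).indicator h, hm.indicator measurableSet_Ici,
    fun x => (hb x).imp fun _ hM z hz => by simpa [hz.1] using hM z hz,
    fun x hx => by simp [hx]⟩

lemma extendByZero_eqOn {h : ℝ → ℝ} (hm : Measurable h) (hb : LocBdd h) :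
    EqOn (extendByZero h hm hb) h (Ici 0) :=
  fun _ hx => indicator_of_mem hx _

lemma ext_of_eqOn {h g : LocBddMeas} (hg : EqOn h g (Ici 0)) : h = g :=
  Subtype.ext <| funext fun x => (lt_or_ge x 0).elim
    (fun hx => (apply_of_neg h hx).trans (apply_of_neg g hx).symm) fun hx => hg hx

lemma intervalIntegrable (h : LocBddMeas) (a b : ℝ) : IntervalIntegrable h volume a b := by
  obtain ⟨M, hM⟩ := locBdd h (max a b)
  refine (intervalIntegrable_const (c := |M|)).mono_fun' (measurable h).aestronglyMeasurable ?_
  refine (ae_restrict_iff' measurableSet_uIoc).2 (Eventually.of_forall fun z hz => ?_)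
  rcases lt_or_ge z 0 with hz0 | hz0
  · simp [apply_of_neg h hz0]
  · exact (hM z ⟨hz0, hz.2⟩).trans (le_abs_self M)

lemma integrableOn_comp_sub (h : LocBddMeas) (μ : Measure ℝ) [IsFiniteMeasure μ] (z : ℝ) :
    IntegrableOn (fun y => h (z - y)) (Icc 0 z) μ := by
  obtain ⟨M, hM⟩ := locBdd h z
  refine IntegrableOn.of_bound (measure_lt_top _ _)
    ((measurable h).comp (measurable_const.sub measurable_id)).aestronglyMeasurable M ?_
  refine (ae_restrict_iff' measurableSet_Icc).2 (Eventually.of_forall fun y hy => hM _ ?_)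
  exact ⟨sub_nonneg.2 hy.2, sub_le_self z hy.1⟩

/-- The operator `h ↦ F * h`, the Stieltjes convolution with the distribution function of `μ`. -/
noncomputable def stieltjesConv (μ : Measure ℝ) [IsFiniteMeasure μ] :
    Module.End ℝ LocBddMeas where
  toFun h := ⟨fun z => ∫ y in Icc 0 z, h (z - y) ∂μ,
    measurable_setIntegral_Icc_comp_sub (measurable h) fun _ => apply_of_neg h,
    fun x => (locBdd h x).imp' (μ.real univ * ·) fun _ hM z hz =>
      abs_setIntegral_Icc_comp_sub_le μ hz.1 fun w hw => hM w ⟨hw.1, hw.2.trans hz.2⟩,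
    fun z hz => by simp [Icc_eq_empty hz.not_ge]⟩
  map_add' h g := Subtype.ext <| funext fun z =>
    integral_add (integrableOn_comp_sub h μ z) (integrableOn_comp_sub g μ z)
  map_smul' c h := Subtype.ext <| funext fun z => integral_const_mul c fun y => h (z - y)

/-- The operator `h ↦ ∫₀ˣ h(z) dz`. -/
noncomputable def primitive : Module.End ℝ LocBddMeas where
  toFun h := ⟨fun x => ∫ z in (0 : ℝ)..x, h z,
    mem_of_continuous
      (intervalIntegral.continuous_primitive (intervalIntegrable h) 0) fun x hx => by
        have hzero : ∀ z ∈ Ioo x 0, h z = 0 := fun z hz => apply_of_neg h hz.2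
        rw [intervalIntegral.integral_of_ge hx.le, integral_Ioc_eq_integral_Ioo,
          setIntegral_eq_zero_of_forall_eq_zero hzero, neg_zero]⟩
  map_add' h g := Subtype.ext <| funext fun x =>
    intervalIntegral.integral_add (intervalIntegrable h 0 x) (intervalIntegrable g 0 x)
  map_smul' c h := Subtype.ext <| funext fun x => intervalIntegral.integral_const_mul c h

/-- The compounding operator `Ψ_F` as an endomorphism of `LocBddMeas`. -/
noncomputable def compounding (μ : Measure ℝ) [IsFiniteMeasure μ] : Module.End ℝ LocBddMeas :=
  primitive * (1 - stieltjesConv μ)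

lemma coe_compounding (μ : Measure ℝ) [IsFiniteMeasure μ] (h : LocBddMeas) :
    (compounding μ h : ℝ → ℝ) = Psi μ h := rfl

lemma extendByZero_add_compounding_eqOn (μ : Measure ℝ) [IsFiniteMeasure μ] {h g : ℝ → ℝ}
    (hm : Measurable h) (hb : LocBdd h) (gm : Measurable g) (gb : LocBdd g) :
    EqOn (extendByZero h hm hb + compounding μ (extendByZero g gm gb))
      (fun x => h x + Psi μ g x) (Ici 0) :=
  fun _ hx => congrArg₂ (· + ·) (extendByZero_eqOn hm hb hx)
    (Psi_eqOn μ (extendByZero_eqOn gm gb) hx)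

lemma coe_sum_smul_compounding (μ : Fin 5 → Measure ℝ) [∀ j, IsFiniteMeasure (μ j)]
    (γ : Fin 5 → ℝ) (h : LocBddMeas) :
    ((∑ j, γ j • compounding (μ j)) h : ℝ → ℝ) = PsiVec μ γ h := by
  funext x
  simp [PsiVec, coe_compounding]

lemma coe_pow_sum_smul_compounding (μ : Fin 5 → Measure ℝ) [∀ j, IsFiniteMeasure (μ j)]
    (γ : Fin 5 → ℝ) (h : LocBddMeas) (n : ℕ) :
    (((∑ j, γ j • compounding (μ j)) ^ n) h : ℝ → ℝ) = (PsiVec μ γ)^[n] h := by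
  induction n with
  | zero => rfl
  | succ n ih =>
    rw [pow_succ', Module.End.mul_apply, coe_sum_smul_compounding, ih,
      Function.iterate_succ_apply']

end LocBddMeas

/-- `A` is an operator of Volterra type with constant `K`: `|A h (x)|` is at most `K` times the
integral over `[0,x]` of any monotone majorant of `|h|`. -/
def IsVolterra (K : ℝ) (A : Module.End ℝ LocBddMeas) : Prop :=
  ∀ ⦃h : LocBddMeas⦄ ⦃x : ℝ⦄ ⦃g : ℝ → ℝ⦄, 0 ≤ x → MonotoneOn g (Icc 0 x) →
    (∀ z ∈ Icc 0 x, |h z| ≤ g z) → |A h x| ≤ K * ∫ z in (0 : ℝ)..x, g z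

theorem isVolterra_compounding (μ : Measure ℝ) [IsFiniteMeasure μ] :
    IsVolterra (1 + μ.real univ) (LocBddMeas.compounding μ) := by
  intro h x g hx hg hh
  have abs_integrand_le : ∀ z ∈ Ioc 0 x,
      |h z - ∫ y in Icc 0 z, h (z - y) ∂μ| ≤ (1 + μ.real univ) * g z := by
    intro z hz
    have hz' : z ∈ Icc 0 x := Ioc_subset_Icc_self hz
    have hconv := abs_setIntegral_Icc_comp_sub_le μ hz.1.le fun w hw =>
      have hw' : w ∈ Icc 0 x := ⟨hw.1, hw.2.trans hz.2⟩
      (hh w hw').trans (hg hw' hz' hw.2)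
    linarith [abs_sub (h z) (∫ y in Icc 0 z, h (z - y) ∂μ), hh z hz']
  rw [← intervalIntegral.integral_const_mul]
  rw [← uIcc_of_le hx] at hg
  exact intervalIntegral.norm_integral_le_of_norm_le (E := ℝ) hx
    (Eventually.of_forall abs_integrand_le) (hg.intervalIntegrable.const_mul _)

lemma hasSum_pow_mul_pow_div_factorial (K C x : ℝ) :
    HasSum (fun n : ℕ => K ^ n * C * (x ^ n / n.factorial)) (C * Real.exp (K * x)) := by
  have hexp : HasSum (fun n : ℕ => (K * x) ^ n / n.factorial) (Real.exp (K * x)) := by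
    rw [Real.exp_eq_exp_ℝ]
    exact NormedSpace.expSeries_div_hasSum_exp _
  exact (hexp.mul_left C).congr_fun fun n => by rw [mul_pow]; ring

namespace IsVolterra

theorem sum_smul {ι : Type*} [Fintype ι] {K : ι → ℝ} {A : ι → Module.End ℝ LocBddMeas}
    (hA : ∀ j, IsVolterra (K j) (A j)) (γ : ι → ℝ) :
    IsVolterra (∑ j, |γ j| * K j) (∑ j, γ j • A j) := by
  intro h x g hx hg hh
  calc |(∑ j, γ j • A j) h x| = |∑ j, γ j * A j h x| := by simp
    _ ≤ ∑ j, |γ j * A j h x| := Finset.abs_sum_le_sum_abs _ _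
    _ ≤ ∑ j, |γ j| * (K j * ∫ z in (0 : ℝ)..x, g z) := by
        simp only [abs_mul]
        gcongr with j
        exact hA j hx hg hh
    _ = (∑ j, |γ j| * K j) * ∫ z in (0 : ℝ)..x, g z := by simp only [Finset.sum_mul, mul_assoc]

variable {K : ℝ} {A : Module.End ℝ LocBddMeas}

lemma nonneg (hA : IsVolterra K A) : 0 ≤ K := by
  simpa using hA (h := 0) zero_le_one (monotoneOn_const (c := (1 : ℝ))) (by simp)

lemma abs_apply_le (hA : IsVolterra K A) {h : LocBddMeas} {x M : ℝ} (hx : 0 ≤ x)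
    (hM : ∀ z ∈ Icc 0 x, |h z| ≤ M) : |A h x| ≤ K * (x * M) := by
  simpa using hA hx monotoneOn_const hM

lemma abs_pow_apply_le (hA : IsVolterra K A) {h : LocBddMeas} {T M : ℝ}
    (hM : ∀ z ∈ Icc 0 T, |h z| ≤ M) (n : ℕ) :
    ∀ x ∈ Icc 0 T, |(A ^ n) h x| ≤ K ^ n * M * (x ^ n / n.factorial) := by
  induction n with
  | zero => simpa using hM
  | succ n ih =>
    intro x hx
    have hM0 : 0 ≤ M := (abs_nonneg _).trans (hM x hx)
    have hK := hA.nonneg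
    have hmono : MonotoneOn (fun z : ℝ => K ^ n * M * (z ^ n / n.factorial)) (Icc 0 x) := by
      intro z hz w _ hzw
      have := hz.1
      beta_reduce
      gcongr
    rw [pow_succ', Module.End.mul_apply]
    refine (hA hx.1 hmono fun z hz => ih z ⟨hz.1, hz.2.trans hx.2⟩).trans_eq ?_
    simp only [intervalIntegral.integral_const_mul, intervalIntegral.integral_div, integral_pow,
      Nat.factorial_succ, zero_pow n.succ_ne_zero, sub_zero]
    push_cast
    field_simp
    ring

lemma summable_pow_apply (hA : IsVolterra K A) (h : LocBddMeas) (x : ℝ) :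
    Summable fun n : ℕ => (A ^ n) h x := by
  rcases lt_or_ge x 0 with hx | hx
  · simpa only [LocBddMeas.apply_of_neg _ hx] using summable_zero
  · obtain ⟨M, hM⟩ := LocBddMeas.locBdd h x
    exact .of_norm_bounded (hasSum_pow_mul_pow_div_factorial K M x).summable
      fun n => hA.abs_pow_apply_le hM n x ⟨hx, le_rfl⟩

/-- The Neumann series `∑ₙ Aⁿ h` of an operator of Volterra type, as a linear function of `h`. -/
noncomputable def neumannSeries (hA : IsVolterra K A) : LocBddMeas →ₗ[ℝ] ℝ → ℝ where
  toFun h x := ∑' n : ℕ, (A ^ n) h x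
  map_add' h g := by
    funext x
    simp [(hA.summable_pow_apply h x).tsum_add (hA.summable_pow_apply g x)]
  map_smul' c h := by
    funext x
    simp [tsum_mul_left]

lemma neumannSeries_apply (hA : IsVolterra K A) (h : LocBddMeas) (x : ℝ) :
    hA.neumannSeries h x = ∑' n : ℕ, (A ^ n) h x := rfl

lemma neumannSeries_sub_apply_self (hA : IsVolterra K A) (h : LocBddMeas) :
    hA.neumannSeries (h - A h) = h := by
  funext x
  rw [map_sub, Pi.sub_apply, neumannSeries_apply, neumannSeries_apply,
    (hA.summable_pow_apply h x).tsum_eq_zero_add]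
  simp [pow_succ]

lemma abs_neumannSeries_le (hA : IsVolterra K A) {h : LocBddMeas} {x M : ℝ} (hx : 0 ≤ x)
    (hM : ∀ z ∈ Icc 0 x, |h z| ≤ M) : |hA.neumannSeries h x| ≤ M * Real.exp (K * x) :=
  tsum_of_norm_bounded (f := fun n : ℕ => (A ^ n) h x) (hasSum_pow_mul_pow_div_factorial K M x)
    fun n => hA.abs_pow_apply_le hM n x ⟨hx, le_rfl⟩

lemma abs_neumannSeries_apply_le (hA : IsVolterra K A) {L : ℝ} {B : Module.End ℝ LocBddMeas}
    (hB : IsVolterra L B) {h : LocBddMeas} {x M : ℝ} (hx : 0 ≤ x)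
    (hM : ∀ z ∈ Icc 0 x, |h z| ≤ M) :
    |hA.neumannSeries (B h) x| ≤ L * x * Real.exp (K * x) * M := by
  have hM0 : 0 ≤ M := (abs_nonneg _).trans (hM x ⟨hx, le_rfl⟩)
  have hL := hB.nonneg
  have hBh : ∀ z ∈ Icc 0 x, |B h z| ≤ L * (x * M) := fun z hz =>
    (hB.abs_apply_le hz.1 fun w hw => hM w ⟨hw.1, hw.2.trans hz.2⟩).trans
      (by have := hz.2; gcongr)
  exact (hA.abs_neumannSeries_le hx hBh).trans_eq (by ring)

lemma tendsto_neumannSeries_apply (hA : IsVolterra K A) {L : ℝ} {B : Module.End ℝ LocBddMeas}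
    (hB : IsVolterra L B) {x : ℝ} (hx : 0 ≤ x) {β : Type*} {l : Filter β} {h : β → LocBddMeas}
    {h₀ : LocBddMeas} (hh : TendstoUniformlyOn (fun b => h b) h₀ l (Icc 0 x)) :
    Tendsto (fun b => hA.neumannSeries (B (h b)) x) l (nhds (hA.neumannSeries (B h₀) x)) := by
  set C := L * x * Real.exp (K * x)
  have hC : 0 ≤ C := mul_nonneg (mul_nonneg hB.nonneg hx) (Real.exp_pos _).le
  refine Metric.tendsto_nhds.2 fun ε hε => ?_
  have hδ : 0 < ε / (C + 1) := by positivity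
  filter_upwards [Metric.tendstoUniformlyOn_iff.1 hh _ hδ] with b hb
  have hbound : ∀ z ∈ Icc 0 x, |(h b - h₀) z| ≤ ε / (C + 1) := fun z hz => by
    simpa [Real.dist_eq, abs_sub_comm] using (hb z hz).le
  calc dist (hA.neumannSeries (B (h b)) x) (hA.neumannSeries (B h₀) x)
      = |hA.neumannSeries (B (h b - h₀)) x| := by simp [Real.dist_eq]
    _ ≤ C * (ε / (C + 1)) := hA.abs_neumannSeries_apply_le hB hx hbound
    _ < (C + 1) * (ε / (C + 1)) := by gcongr; exact lt_add_one C
    _ = ε := mul_div_cancel₀ ε (by positivity)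

end IsVolterra

theorem neumannSeries_compounding_eq_uSol {μ : Fin 5 → Measure ℝ} [∀ j, IsFiniteMeasure (μ j)]
    {γ : Fin 5 → ℝ} {K : ℝ} (hA : IsVolterra K (∑ j, γ j • LocBddMeas.compounding (μ j)))
    {h : LocBddMeas} {g : ℝ → ℝ} (hg : EqOn h g (Ici 0)) {x : ℝ} (hx : 0 ≤ x) :
    hA.neumannSeries h x = uSol μ γ g x := by
  refine tsum_congr fun n => ?_
  rw [LocBddMeas.coe_pow_sum_smul_compounding]
  exact iterate_PsiVec_eqOn μ γ hg n hx

lemma hasFDerivAt_smul_sub {𝕜 E F : Type*} [NontriviallyNormedField 𝕜] [NormedAddCommGroup E]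
    [NormedSpace 𝕜 E] [NormedAddCommGroup F] [NormedSpace 𝕜 F] {f : E → F} {f' : E →L[𝕜] F}
    {c : E → 𝕜} {x : E} (hf : HasFDerivAt f f' x) (hc : ContinuousAt c x) :
    HasFDerivAt (fun y => c y • (f y - f x)) (c x • f') x := by
  have hrem : (fun y => (c y - c x) • (f y - f x)) =o[nhds x] fun y => y - x := by
    have hc0 : (fun y => c y - c x) =o[nhds x] fun _ => (1 : 𝕜) :=
      (Asymptotics.isLittleO_one_iff 𝕜).2 (by simpa using hc.tendsto.sub_const (c x))
    have h := hc0.smul_isBigO hf.isBigO_sub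
    simpa only [one_smul] using h
  refine .of_isLittleO ((hrem.add (hf.isLittleO.const_smul_left (c x))).congr_left fun y => ?_)
  simp only [Pi.smul_apply, _root_.smul_apply, sub_self, smul_zero, sub_smul, smul_sub]
  abel

section VolterraEquation

variable {ι : Type*} [Fintype ι] {K : ι → ℝ} {A : ι → Module.End ℝ LocBddMeas}
  {G : ι → LocBddMeas}

theorem solution_sub_apply_eq_sum (hA : ∀ j, IsVolterra (K j) (A j)) {γ γ' : ι → ℝ}
    {V V' : LocBddMeas}
    (hV : V = ∑ j, γ j • (G j + A j V)) (hV' : V' = ∑ j, γ' j • (G j + A j V')) (x : ℝ) :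
    V' x - V x
      = ∑ j, (γ' j - γ j) * (IsVolterra.sum_smul hA γ).neumannSeries (G j + A j V') x := by
  have hsplit : ∑ j, γ j • (G j + A j V') = V + (∑ j, γ j • A j) (V' - V) :=
    calc ∑ j, γ j • (G j + A j V')
        = ∑ j, γ j • (G j + A j V) + ∑ j, γ j • A j (V' - V) := by
          simp only [← Finset.sum_add_distrib, ← smul_add, map_sub, add_assoc, add_sub_cancel]
      _ = V + (∑ j, γ j • A j) (V' - V) := by rw [← hV]; simp
  have hdiff : ∑ j, (γ' j - γ j) • (G j + A j V') = V' - ∑ j, γ j • (G j + A j V') := by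
    rw [eq_sub_iff_add_eq, ← Finset.sum_add_distrib]
    simpa only [← add_smul, sub_add_cancel] using hV'.symm
  have heq : (V' - V) - (∑ j, γ j • A j) (V' - V) = ∑ j, (γ' j - γ j) • (G j + A j V') := by
    rw [hdiff, hsplit, sub_sub]
  have hsum := (IsVolterra.sum_smul hA γ).neumannSeries_sub_apply_self (V' - V)
  rw [heq] at hsum
  rw [← Pi.sub_apply, ← Submodule.coe_sub, ← hsum]
  simp only [map_sum, map_smul, Finset.sum_apply, Pi.smul_apply, smul_eq_mul]

theorem abs_solution_sub_apply_le (hA : ∀ j, IsVolterra (K j) (A j)) {γ γ' : ι → ℝ}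
    {V V' : LocBddMeas}
    (hV : V = ∑ j, γ j • (G j + A j V)) (hV' : V' = ∑ j, γ' j • (G j + A j V'))
    {x : ℝ} (hx : 0 ≤ x) {B : ι → ℝ} (hB : ∀ j, ∀ z ∈ Icc 0 x, |(G j + A j V) z| ≤ B j) :
    |V' x - V x| ≤ ∑ j, |γ' j - γ j| * (B j * Real.exp ((∑ i, |γ' i| * K i) * x)) := by
  rw [abs_sub_comm, solution_sub_apply_eq_sum hA hV' hV x]
  refine (Finset.abs_sum_le_sum_abs _ _).trans (Finset.sum_le_sum fun j _ => ?_)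
  rw [abs_mul, abs_sub_comm]
  exact mul_le_mul_of_nonneg_left
    ((IsVolterra.sum_smul hA γ').abs_neumannSeries_le hx (hB j)) (abs_nonneg _)

theorem tendstoUniformlyOn_solution (hA : ∀ j, IsVolterra (K j) (A j)) {E : Type*}
    [TopologicalSpace E] {α : E → ι → ℝ} {θ : E} (hα : ContinuousAt α θ) {V : E → LocBddMeas}
    (hV : ∀ θ, V θ = ∑ j, α θ j • (G j + A j (V θ))) (x : ℝ) :
    TendstoUniformlyOn (fun θ' => V θ') (V θ) (nhds θ) (Icc 0 x) := by
  choose B hB using fun j => LocBddMeas.locBdd (G j + A j (V θ)) x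
  set b : E → ℝ := fun θ' =>
    ∑ j, |α θ' j - α θ j| * (B j * Real.exp ((∑ i, |α θ' i| * K i) * x))
  have hb : Tendsto b (nhds θ) (nhds 0) := by
    have hαj (j : ι) : ContinuousAt (fun θ' => α θ' j) θ := continuousAt_pi.1 hα j
    have hc : ContinuousAt b θ := by fun_prop
    simpa [b] using hc.tendsto
  refine Metric.tendstoUniformlyOn_iff.2 fun ε hε => ?_
  filter_upwards [hb.eventually_lt_const hε] with θ' hθ' z hz
  rw [dist_comm, Real.dist_eq]
  refine lt_of_le_of_lt ?_ hθ'
  refine (abs_solution_sub_apply_le hA (hV θ) (hV θ') hz.1 fun j w hw =>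
    hB j w ⟨hw.1, hw.2.trans hz.2⟩).trans (Finset.sum_le_sum fun j _ => ?_)
  have hB0 : 0 ≤ B j := (abs_nonneg _).trans (hB j z hz)
  have hK := (IsVolterra.sum_smul hA (α θ')).nonneg
  have := hz.2
  gcongr

theorem hasFDerivAt_solution_apply (hA : ∀ j, IsVolterra (K j) (A j)) {E : Type*}
    [NormedAddCommGroup E] [NormedSpace ℝ E] {α : E → ι → ℝ} {α' : E →L[ℝ] ι → ℝ} {θ : E}
    (hα : HasFDerivAt α α' θ) {V : E → LocBddMeas}
    (hV : ∀ θ, V θ = ∑ j, α θ j • (G j + A j (V θ))) {x : ℝ} (hx : 0 ≤ x) :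
    HasFDerivAt (fun θ' => V θ' x)
      (∑ j, (IsVolterra.sum_smul hA (α θ)).neumannSeries (G j + A j (V θ)) x •
        (ContinuousLinearMap.proj j).comp α') θ := by
  set c : ι → E → ℝ := fun j θ' =>
    (IsVolterra.sum_smul hA (α θ)).neumannSeries (G j + A j (V θ')) x
  have hc (j : ι) : ContinuousAt (c j) θ := by
    have hlim := (IsVolterra.sum_smul hA (α θ)).tendsto_neumannSeries_apply (hA j) hx
      (tendstoUniformlyOn_solution hA hα.continuousAt hV x)
    simpa only [c, ContinuousAt, map_add, Pi.add_apply] using hlim.const_add _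
  have hexpand : (fun θ' => V θ' x) = fun θ' => V θ x + ∑ j, c j θ' • (α θ' j - α θ j) := by
    funext θ'
    rw [← sub_eq_iff_eq_add', solution_sub_apply_eq_sum hA (hV θ) (hV θ') x]
    exact Finset.sum_congr rfl fun j _ => mul_comm _ _
  rw [hexpand]
  exact (HasFDerivAt.fun_sum fun j _ =>
    hasFDerivAt_smul_sub (hasFDerivAt_pi'.1 hα j) (hc j)).const_add _

end VolterraEquation

theorem two_risk_ruin_loading_deriv_general {E : Type*} [NormedAddCommGroup E] [NormedSpace ℝ E]
    (μ : Fin 5 → Measure ℝ) [∀ j, IsFiniteMeasure (μ j)]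
    (Γ : Fin 5 → ℝ → ℝ) (hΓmeas : ∀ j, Measurable (Γ j)) (hΓbdd : ∀ j, LocBdd (Γ j))
    {α : E → Fin 5 → ℝ} {α' : E →L[ℝ] Fin 5 → ℝ} {θ : E} (hα : HasFDerivAt α α' θ)
    (V : E → ℝ → ℝ)
    (hV : ∀ θ : E, Measurable (V θ) ∧ LocBdd (V θ) ∧
      ∀ x ≥ (0 : ℝ), V θ x = (∑ j, α θ j * Γ j x) + ∑ j, α θ j * Psi (μ j) (V θ) x)
    {x : ℝ} (hx : 0 ≤ x) :
    HasFDerivAt (fun θ' => V θ' x)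
      (∑ j, uSol μ (α θ) (fun y => Γ j y + Psi (μ j) (V θ) y) x •
        (ContinuousLinearMap.proj j).comp α') θ := by
  let G (j : Fin 5) : LocBddMeas := LocBddMeas.extendByZero (Γ j) (hΓmeas j) (hΓbdd j)
  let W (θ : E) : LocBddMeas := LocBddMeas.extendByZero (V θ) (hV θ).1 (hV θ).2.1
  have hGW (θ : E) (j : Fin 5) : EqOn (G j + LocBddMeas.compounding (μ j) (W θ))
      (fun y => Γ j y + Psi (μ j) (V θ) y) (Ici 0) :=
    LocBddMeas.extendByZero_add_compounding_eqOn (μ j) _ _ _ _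
  have hVW (θ : E) : EqOn (W θ) (V θ) (Ici 0) := LocBddMeas.extendByZero_eqOn _ _
  have hW (θ : E) : W θ = ∑ j, α θ j • (G j + LocBddMeas.compounding (μ j) (W θ)) := by
    refine LocBddMeas.ext_of_eqOn fun y hy => ?_
    calc W θ y = ∑ j, α θ j * (Γ j y + Psi (μ j) (V θ) y) := by
          rw [hVW θ hy, (hV θ).2.2 y hy]
          simp only [mul_add, Finset.sum_add_distrib]
      _ = ∑ j, α θ j * (G j + LocBddMeas.compounding (μ j) (W θ)) y :=
          Finset.sum_congr rfl fun j _ => by rw [hGW θ j hy]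
      _ = (∑ j, α θ j • (G j + LocBddMeas.compounding (μ j) (W θ)) : LocBddMeas) y := by
          simp only [Submodule.coe_sum, Submodule.coe_smul, Finset.sum_apply, Pi.smul_apply,
            smul_eq_mul]
  have hder := hasFDerivAt_solution_apply (fun j => isVolterra_compounding (μ j)) hα hW hx
  simp only [neumannSeries_compounding_eq_uSol _ (hGW θ _) hx] at hder
  exact hder.congr_of_eventuallyEq (Eventually.of_forall fun θ' => (hVW θ' hx).symm)

/-- derivative of the two-risk ruin probability with respect to the loadings:
if `θ ↦ α(θ)` is differentiable and, for each `θ`, `V_θ` is the (unique) measurable locally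
bounded solution of `V_θ = ⟨α(θ),Γ⟩ + ⟨α(θ),Ψ⟩V_θ` on `[0,∞)`, then for every `x ≥ 0` the
map `θ ↦ V_θ(x)` is differentiable and
`∂V_θ(x)/∂θᵢ = Σ_{j=1}^5 u_{α(θ), Γⱼ + Ψⱼ V_θ}(x) ∂αⱼ(θ)/∂θᵢ`. -/
theorem two_risk_ruin_loading_deriv
    (μ : Fin 5 → Measure ℝ) [∀ j, IsProbabilityMeasure (μ j)]
    (hμ0 : ∀ j, μ j (Iic 0) = 0)
    (Γ : Fin 5 → ℝ → ℝ) (hΓmeas : ∀ j, Measurable (Γ j)) (hΓbdd : ∀ j, LocBdd (Γ j))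
    (α : (Fin 2 → ℝ) → Fin 5 → ℝ) (hα : Differentiable ℝ α)
    (V : (Fin 2 → ℝ) → ℝ → ℝ)
    (hV : ∀ θ : Fin 2 → ℝ, Measurable (V θ) ∧ LocBdd (V θ) ∧
      ∀ x ≥ (0:ℝ), V θ x = (∑ j, α θ j * Γ j x) + ∑ j, α θ j * Psi (μ j) (V θ) x) :
    ∀ x ≥ (0:ℝ), ∀ θ : Fin 2 → ℝ,
      DifferentiableAt ℝ (fun θ' => V θ' x) θ ∧
      ∀ i : Fin 2, fderiv ℝ (fun θ' => V θ' x) θ (Pi.single i 1) =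
        ∑ j, uSol μ (α θ) (fun y => Γ j y + Psi (μ j) (V θ) y) x *
          fderiv ℝ α θ (Pi.single i 1) j := by
  intro x hx θ
  have hder := two_risk_ruin_loading_deriv_general μ Γ hΓmeas hΓbdd (hα θ).hasFDerivAt V hV hx
  exact ⟨hder.differentiableAt, fun i => by simp [hder.fderiv]⟩
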